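/- A function F : [0,∞) → ℝ maps M([0,1]) into itself when applied entrywise if and only if F is absolutely monotonic on (0,∞) — that is, F is infinitely differentiable on (0,∞) with F^{(k)}(x) ≥ 0 for every x > 0 and every integer k ≥ 0 (in particular F is non-decreasing there) — and 0 ≤ F(0) ≤ lim_{ε→0⁺} F(ε). -/

import Mathlib

open MeasureTheory Filter Set
open scoped ENNReal

/-- An admissible measure: a non-negative Borel measure on `ℝ` all of whose absolute
moments are finite. -/
def IsAdmissible (μ : Measure ℝ) : Prop := ∀ k : ℕ, Integrable (fun x => x ^ k) μ

/-- The `k`-th power moment of a measure. -/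
noncomputable def moment (μ : Measure ℝ) (k : ℕ) : ℝ := ∫ x, x ^ k ∂μ

/-- `momentSet K` is the set of moment sequences of admissible measures supported in `K`. -/
def momentSet (K : Set ℝ) : Set (ℕ → ℝ) :=
  {s | ∃ μ : Measure ℝ, IsAdmissible μ ∧ μ Kᶜ = 0 ∧ ∀ k, s k = moment μ k}

/-- An absolutely monotonic entire function: a power series with non-negative
coefficients converging at every real point. -/
def AbsolutelyMonotonicEntire (G : ℝ → ℝ) : Prop :=
  ∃ c : ℕ → ℝ, (∀ n, 0 ≤ c n) ∧ ∀ x : ℝ, HasSum (fun n => c n * x ^ n) (G x)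

open scoped ContDiff Topology Nat Polynomial

/-!
If `F` preserves moment sequences, applying it to the moments `a + b * u ^ k` of two point masses
gives positive semidefinite Hankel matrices. When `F` is smooth, expanding a suitable quadratic
form in `b` shows that every derivative of `F` is nonnegative (Horn–Loewner). In general `F` is
monotone, hence squeezed between translates of its mollifications; these are smooth with the same
Hankel positivity, so by Bernstein's theorem they are power series with nonnegative coefficients,
and compactness of the coefficients passes to the limit. Conversely, moment sequences are closed
under products and nonnegative series, hence under power series with nonnegative coefficients; the
value `F 0` matters only for multiples of the point mass at `0`.
-/

section PowerSeries

lemma norm_mul_natCast_mul_pow_pred_le {c R y : ℝ} (hc : 0 ≤ c) (hR : 1 ≤ R) (hy : |y| ≤ R)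
    (n : ℕ) : ‖c * (n * y ^ (n - 1))‖ ≤ c * (2 * R) ^ n := by
  have hn : (n : ℝ) ≤ 2 ^ n := mod_cast Nat.lt_two_pow_self.le
  have hpow : |y| ^ (n - 1) ≤ R ^ n :=
    (pow_le_pow_left₀ (abs_nonneg y) hy _).trans (pow_le_pow_right₀ hR n.pred_le)
  rw [norm_mul, norm_mul, norm_pow, Real.norm_of_nonneg hc, Real.norm_natCast, Real.norm_eq_abs,
    mul_pow]
  gcongr

lemma summable_mul_pow_of_forall_pos {c : ℕ → ℝ} (hc : ∀ n, 0 ≤ c n)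
    (h : ∀ x > 0, Summable fun n ↦ c n * x ^ n) (x : ℝ) : Summable fun n ↦ c n * x ^ n := by
  refine .of_norm_bounded (h (|x| + 1) (by positivity)) fun n ↦ ?_
  rw [norm_mul, norm_pow, Real.norm_of_nonneg (hc n), Real.norm_eq_abs]
  have := hc n
  gcongr
  linarith

namespace AbsolutelyMonotonicEntire

variable {g : ℝ → ℝ}

lemma nonneg (hg : AbsolutelyMonotonicEntire g) {x : ℝ} (hx : 0 ≤ x) : 0 ≤ g x := by
  obtain ⟨c, hc, hsum⟩ := hg
  exact (hsum x).nonneg fun n ↦ mul_nonneg (hc n) (pow_nonneg hx n)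

lemma exists_hasDerivAt (hg : AbsolutelyMonotonicEntire g) :
    ∃ g', AbsolutelyMonotonicEntire g' ∧ ∀ x, HasDerivAt g (g' x) x := by
  obtain ⟨c, hc, hsum⟩ := hg
  have hR (x : ℝ) : 1 ≤ |x| + 1 := by linarith [abs_nonneg x]
  have hsum' (x : ℝ) : Summable fun n : ℕ ↦ c n * (n * x ^ (n - 1)) :=
    .of_norm_bounded (hsum (2 * (|x| + 1))).summable fun n ↦
      norm_mul_natCast_mul_pow_pred_le (hc n) (hR x) (by linarith) n
  refine ⟨fun x ↦ ∑' n : ℕ, c n * (n * x ^ (n - 1)),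
    ⟨fun n ↦ c (n + 1) * (n + 1), fun n ↦ mul_nonneg (hc _) (by positivity), fun x ↦ ?_⟩,
    fun x ↦ ?_⟩
  · simpa [mul_assoc] using (hasSum_nat_add_iff' 1).2 (hsum' x).hasSum
  · rw [show g = fun z ↦ ∑' n, c n * z ^ n from funext fun z ↦ (hsum z).tsum_eq.symm]
    refine hasDerivAt_tsum_of_isPreconnected (hsum (2 * (|x| + 1))).summable
      (Metric.isOpen_ball (x := (0 : ℝ)) (ε := |x| + 1)) (convex_ball _ _).isPreconnected
      (fun n y _ ↦ (hasDerivAt_pow n y).const_mul (c n)) (fun n y hy ↦ ?_)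
      (Metric.mem_ball_self (by positivity)) (hsum 0).summable (by simp)
    exact norm_mul_natCast_mul_pow_pred_le (hc n) (hR x) (mem_ball_zero_iff.1 hy).le n

lemma deriv (hg : AbsolutelyMonotonicEntire g) : AbsolutelyMonotonicEntire (deriv g) := by
  obtain ⟨g', hg', hderiv⟩ := hg.exists_hasDerivAt
  rwa [show _root_.deriv g = g' from funext fun x ↦ (hderiv x).deriv]

lemma differentiable (hg : AbsolutelyMonotonicEntire g) : Differentiable ℝ g := by
  obtain ⟨g', -, hderiv⟩ := hg.exists_hasDerivAt
  exact fun x ↦ (hderiv x).differentiableAt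

lemma iteratedDeriv (hg : AbsolutelyMonotonicEntire g) (n : ℕ) :
    AbsolutelyMonotonicEntire (iteratedDeriv n g) := by
  induction n with
  | zero => simpa using hg
  | succ n ih => simpa [iteratedDeriv_succ] using ih.deriv

lemma contDiff (hg : AbsolutelyMonotonicEntire g) : ContDiff ℝ ∞ g :=
  contDiff_of_differentiable_iteratedDeriv fun n _ ↦ (hg.iteratedDeriv n).differentiable

lemma absolutelyMonotoneOn_Ici (hg : AbsolutelyMonotonicEntire g) :
    AbsolutelyMonotoneOn g (Ici 0) :=
  .of_contDiff hg.contDiff fun n _ hx ↦ (hg.iteratedDeriv n).nonneg hx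

lemma monotoneOn_Ici (hg : AbsolutelyMonotonicEntire g) : MonotoneOn g (Ici 0) := by
  obtain ⟨c, hc, hsum⟩ := hg
  intro x hx y _ hxy
  refine hasSum_le (fun n ↦ ?_) (hsum x) (hsum y)
  exact mul_le_mul_of_nonneg_left (pow_le_pow_left₀ hx hxy n) (hc n)

lemma exists_tendsto_ultrafilter {ι : Type*} {G : ι → ℝ → ℝ}
    (hG : ∀ i, AbsolutelyMonotonicEntire (G i)) (hbdd : ∀ x > 0, ∃ B, ∀ i, G i x ≤ B)
    (U : Ultrafilter ι) :
    ∃ g, AbsolutelyMonotonicEntire g ∧ ∀ x > 0, Tendsto (fun i ↦ G i x) U (𝓝 (g x)) := by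
  choose c hc hsum using hG
  choose! B hB using hbdd
  have hterm (i : ι) (n : ℕ) {x : ℝ} (hx : 0 < x) : c i n * x ^ n ≤ B x :=
    (le_hasSum (hsum i x) n fun j _ ↦ mul_nonneg (hc i j) (by positivity)).trans (hB x hx i)
  have hgeom (i : ι) (n : ℕ) {x : ℝ} (hx : 0 < x) :
      c i n * x ^ n ≤ B (2 * x) * (1 / 2) ^ n :=
    calc c i n * x ^ n = c i n * (2 * x) ^ n * (1 / 2) ^ n := by
          rw [mul_assoc, ← mul_pow, show 2 * x * (1 / 2) = x by ring]
      _ ≤ B (2 * x) * (1 / 2) ^ n := by gcongr; exact hterm i n (by positivity)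
  have hlim (n : ℕ) : ∃ l ∈ Icc 0 (B 1), Tendsto (fun i ↦ c i n) U (𝓝 l) :=
    isCompact_Icc.ultrafilter_le_nhds (U.map fun i ↦ c i n) <| le_principal_iff.2 <|
      Filter.mem_map.2 <| univ_mem' fun i ↦ ⟨hc i n, by simpa using hterm i n one_pos⟩
  choose l hl htendsto using hlim
  have hsummable (x : ℝ) : Summable fun n : ℕ ↦ B (2 * x) * (1 / 2) ^ n :=
    (summable_geometric_of_lt_one (by norm_num) (by norm_num)).mul_left _
  have hl_summable : ∀ x > 0, Summable fun n ↦ l n * x ^ n := fun x hx ↦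
    .of_nonneg_of_le (fun n ↦ mul_nonneg (hl n).1 (by positivity))
      (fun n ↦ le_of_tendsto ((htendsto n).mul_const _) (.of_forall fun i ↦ hgeom i n hx))
      (hsummable x)
  refine ⟨fun x ↦ ∑' n, l n * x ^ n, ⟨l, fun n ↦ (hl n).1, fun x ↦
    (summable_mul_pow_of_forall_pos (fun n ↦ (hl n).1) hl_summable x).hasSum⟩, fun x hx ↦ ?_⟩
  have hdom : ∀ᶠ i in (U : Filter ι), ∀ n, ‖c i n * x ^ n‖ ≤ B (2 * x) * (1 / 2) ^ n :=
    .of_forall fun i n ↦ by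
      rw [Real.norm_of_nonneg (mul_nonneg (hc i n) (by positivity))]
      exact hgeom i n hx
  exact (tendsto_tsum_of_dominated_convergence (hsummable x)
    (fun n ↦ (htendsto n).mul_const (x ^ n)) hdom).congr fun i ↦ (hsum i x).tsum_eq

end AbsolutelyMonotonicEntire

lemma exists_absolutelyMonotonicEntire_eqOn_of_squeeze {F : ℝ → ℝ} (hF : MonotoneOn F (Ioi 0))
    (hsqueeze : ∀ d > 0, ∃ G, AbsolutelyMonotonicEntire G ∧
      ∀ x > 0, F x ≤ G x ∧ G x ≤ F (x + d)) :
    ∃ g, AbsolutelyMonotonicEntire g ∧ EqOn F g (Ioi 0) := by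
  choose G hG hlower hupper using fun m : ℕ ↦ by
    simpa only [forall_and] using hsqueeze (1 / ((m : ℝ) + 1)) Nat.one_div_pos_of_nat
  have hbdd (x : ℝ) (hx : 0 < x) : ∃ B, ∀ m, G m x ≤ B := by
    refine ⟨F (x + 1), fun m ↦ (hupper m x hx).trans ?_⟩
    have hm : 1 / ((m : ℝ) + 1) ≤ 1 := by
      simpa using Nat.one_div_le_one_div (α := ℝ) m.zero_le
    exact hF (add_pos hx Nat.one_div_pos_of_nat) (add_pos hx one_pos) (by linarith)
  obtain ⟨g, hg, hlim⟩ :=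
    AbsolutelyMonotonicEntire.exists_tendsto_ultrafilter hG hbdd (hyperfilter ℕ)
  have hg_le {x y : ℝ} (hx : 0 < x) (hxy : x < y) : g x ≤ F y := by
    have hshift : ∀ᶠ m : ℕ in atTop, 1 / ((m : ℝ) + 1) < y - x :=
      tendsto_one_div_add_atTop_nhds_zero_nat.eventually_lt_const (sub_pos.2 hxy)
    refine le_of_tendsto (hlim x hx) (Nat.hyperfilter_le_atTop ?_)
    filter_upwards [hshift] with m hm
    exact (hupper m x hx).trans <|
      hF (add_pos hx Nat.one_div_pos_of_nat) (hx.trans hxy) (by linarith)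
  refine ⟨g, hg, fun x hx ↦ le_antisymm
    (ge_of_tendsto (hlim x hx) (.of_forall fun m ↦ hlower m x hx)) ?_⟩
  have hcont : Tendsto g (𝓝[<] x) (𝓝 (g x)) := hg.contDiff.continuous.continuousWithinAt
  refine le_of_tendsto hcont ?_
  filter_upwards [Ioo_mem_nhdsLT hx] with z hz using hg_le hz.1 hz.2

end PowerSeries

section Taylor

variable {f : ℝ → ℝ} {s : Set ℝ} {x₀ x : ℝ}

lemma exists_sub_sum_iteratedDeriv_eq (hs : IsOpen s) {n : ℕ} (hf : ContDiffOn ℝ (n + 1) f s)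
    (hx : x₀ < x) (hsub : Icc x₀ x ⊆ s) :
    ∃ ξ ∈ Ioo x₀ x, f x - ∑ k ∈ Finset.range (n + 1), iteratedDeriv k f x₀ / k ! * (x - x₀) ^ k =
      iteratedDeriv (n + 1) f ξ / (n + 1)! * (x - x₀) ^ (n + 1) := by
  have hx₀ : x₀ ∈ s := hsub (left_mem_Icc.2 hx.le)
  have hderiv {k : ℕ} (hk : k < n + 1) :
      iteratedDerivWithin k f (uIcc x₀ x) x₀ = iteratedDeriv k f x₀ :=
    iteratedDerivWithin_eq_iteratedDeriv (uniqueDiffOn_uIcc hx.ne)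
      ((hf.contDiffAt (hs.mem_nhds hx₀)).of_le (by exact_mod_cast hk.le)) left_mem_uIcc
  obtain ⟨ξ, hξ, heq⟩ := taylor_mean_remainder_lagrange_iteratedDeriv hx.ne
    (hf.mono (by rwa [uIcc_of_le hx.le]))
  rw [uIoo_of_le hx.le] at hξ
  refine ⟨ξ, hξ, ?_⟩
  rw [div_mul_eq_mul_div, ← heq, taylor_within_apply]
  congr 1
  refine Finset.sum_congr rfl fun k hk ↦ ?_
  rw [hderiv (Finset.mem_range.1 hk), smul_eq_mul]
  ring

lemma absolutelyMonotoneOn_mono {t : Set ℝ} (hf : AbsolutelyMonotoneOn f s) (hts : t ⊆ s) :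
    AbsolutelyMonotoneOn f t := by
  obtain ⟨p, hp, hnonneg⟩ := hf
  exact ⟨p, hp.mono hts, fun n _ hx ↦ hnonneg n (hts hx)⟩

lemma absolutelyMonotoneOn_congr {g : ℝ → ℝ} (hf : AbsolutelyMonotoneOn f s) (h : EqOn g f s) :
    AbsolutelyMonotoneOn g s := by
  obtain ⟨p, hp, hnonneg⟩ := hf
  exact ⟨p, hp.congr h, hnonneg⟩

lemma iteratedDeriv_nonneg_of_absolutelyMonotoneOn (hs : IsOpen s)
    (hf : AbsolutelyMonotoneOn f s) (n : ℕ) (hx : x ∈ s) : 0 ≤ iteratedDeriv n f x := by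
  rw [← iteratedDerivWithin_of_isOpen hs hx]
  exact hf.iteratedDerivWithin_nonneg hs.uniqueDiffOn n hx

lemma taylor_term_nonneg_of_absolutelyMonotoneOn (hs : IsOpen s)
    (hf : AbsolutelyMonotoneOn f s) (hx₀ : x₀ ∈ s) (hx : x₀ ≤ x) (n : ℕ) :
    0 ≤ iteratedDeriv n f x₀ / n ! * (x - x₀) ^ n := by
  have := iteratedDeriv_nonneg_of_absolutelyMonotoneOn hs hf n hx₀
  have := sub_nonneg.2 hx
  positivity

lemma monotoneOn_iteratedDeriv_of_absolutelyMonotoneOn (hs : IsOpen s) (hconv : Convex ℝ s)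
    (hf : AbsolutelyMonotoneOn f s) (n : ℕ) : MonotoneOn (iteratedDeriv n f) s := by
  have hdiff : DifferentiableOn ℝ (iteratedDeriv n f) s :=
    (hf.contDiffOn.differentiableOn_iteratedDerivWithin (mod_cast ENat.natCast_lt_top n)
      hs.uniqueDiffOn).congr (iteratedDerivWithin_of_isOpen hs).symm
  refine monotoneOn_of_deriv_nonneg hconv hdiff.continuousOn (hdiff.mono interior_subset)
    fun x hx ↦ ?_
  rw [← iteratedDeriv_succ]
  exact iteratedDeriv_nonneg_of_absolutelyMonotoneOn hs hf _ (interior_subset hx)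

lemma sub_sum_iteratedDeriv_mem_Icc_of_absolutelyMonotoneOn (hs : IsOpen s) (hconv : Convex ℝ s)
    (hf : AbsolutelyMonotoneOn f s) (hx₀ : x₀ ∈ s) (hx : x ∈ s) (hlt : x₀ < x) (n : ℕ) :
    f x - ∑ k ∈ Finset.range (n + 1), iteratedDeriv k f x₀ / k ! * (x - x₀) ^ k ∈
      Icc 0 (iteratedDeriv (n + 1) f x / (n + 1)! * (x - x₀) ^ (n + 1)) := by
  have hsub : Icc x₀ x ⊆ s := hconv.ordConnected.out hx₀ hx
  obtain ⟨ξ, hξ, heq⟩ := exists_sub_sum_iteratedDeriv_eq hs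
    (hf.contDiffOn.of_le (by exact_mod_cast le_top)) hlt hsub
  have hξs : ξ ∈ s := hsub (Ioo_subset_Icc_self hξ)
  have : 0 < x - x₀ := sub_pos.2 hlt
  have hnonneg := iteratedDeriv_nonneg_of_absolutelyMonotoneOn hs hf (n + 1) hξs
  have hmono := monotoneOn_iteratedDeriv_of_absolutelyMonotoneOn hs hconv hf (n + 1) hξs hx hξ.2.le
  rw [heq]
  exact ⟨by positivity, by gcongr⟩

lemma summable_taylor_of_absolutelyMonotoneOn (hs : IsOpen s) (hconv : Convex ℝ s)
    (hf : AbsolutelyMonotoneOn f s) (hx₀ : x₀ ∈ s) (hx : x ∈ s) (hlt : x₀ < x) :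
    Summable fun n ↦ iteratedDeriv n f x₀ / n ! * (x - x₀) ^ n := by
  have hnonneg := taylor_term_nonneg_of_absolutelyMonotoneOn hs hf hx₀ hlt.le
  refine summable_of_sum_range_le hnonneg (c := f x) fun n ↦ ?_
  have hle :=
    (sub_sum_iteratedDeriv_mem_Icc_of_absolutelyMonotoneOn hs hconv hf hx₀ hx hlt n).1
  rw [Finset.sum_range_succ] at hle
  linarith [hnonneg n]

lemma hasSum_taylor_of_absolutelyMonotoneOn (hs : IsOpen s) (hconv : Convex ℝ s)
    (hf : AbsolutelyMonotoneOn f s) (hx₀ : x₀ ∈ s) (hx : x ∈ s) (hlt : x₀ < x)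
    (hreflect : x + (x - x₀) ∈ s) :
    HasSum (fun n ↦ iteratedDeriv n f x₀ / n ! * (x - x₀) ^ n) (f x) := by
  -- The bound on the remainder is a term of the Taylor series at `x` evaluated at `x + (x - x₀)`.
  have hzero : Tendsto (fun n ↦ iteratedDeriv n f x / n ! * (x - x₀) ^ n) atTop (𝓝 0) := by
    simpa only [add_sub_cancel_left] using (summable_taylor_of_absolutelyMonotoneOn hs hconv hf hx
      hreflect (lt_add_of_pos_right x (sub_pos.2 hlt))).tendsto_atTop_zero
  have hremainder : Tendsto (fun n ↦ f x -
      ∑ k ∈ Finset.range (n + 1), iteratedDeriv k f x₀ / k ! * (x - x₀) ^ k) atTop (𝓝 0) :=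
    tendsto_of_tendsto_of_tendsto_of_le_of_le tendsto_const_nhds
      ((tendsto_add_atTop_iff_nat 1).2 hzero)
      (fun n ↦ (sub_sum_iteratedDeriv_mem_Icc_of_absolutelyMonotoneOn hs hconv hf hx₀ hx hlt n).1)
      (fun n ↦ (sub_sum_iteratedDeriv_mem_Icc_of_absolutelyMonotoneOn hs hconv hf hx₀ hx hlt n).2)
  rw [hasSum_iff_tendsto_nat_of_nonneg
    (taylor_term_nonneg_of_absolutelyMonotoneOn hs hf hx₀ hlt.le), ← tendsto_add_atTop_iff_nat 1]
  simpa only [sub_sub_cancel, sub_zero] using hremainder.const_sub (f x)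

end Taylor

section Bernstein

lemma exists_absolutelyMonotonicEntire_shift_of_absolutelyMonotoneOn {F : ℝ → ℝ}
    (hF : AbsolutelyMonotoneOn F (Ioi 0)) {d : ℝ} (hd : 0 < d) :
    ∃ G, AbsolutelyMonotonicEntire G ∧ ∀ x > 0, G x = F (x + d) := by
  have hcoeff (n : ℕ) : 0 ≤ iteratedDeriv n F d / n ! :=
    div_nonneg (iteratedDeriv_nonneg_of_absolutelyMonotoneOn isOpen_Ioi hF n hd) (by positivity)
  have hsum (x : ℝ) (hx : 0 < x) :
      HasSum (fun n ↦ iteratedDeriv n F d / n ! * x ^ n) (F (x + d)) := by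
    simpa only [add_sub_cancel_right] using hasSum_taylor_of_absolutelyMonotoneOn isOpen_Ioi
      (convex_Ioi 0) hF hd (add_pos hx hd) (lt_add_of_pos_left d hx)
      (by simp only [add_sub_cancel_right, mem_Ioi]; positivity)
  refine ⟨_, ⟨_, hcoeff, fun x ↦ (summable_mul_pow_of_forall_pos hcoeff
    (fun y hy ↦ (hsum y hy).summable) x).hasSum⟩, fun x hx ↦ (hsum x hx).tsum_eq⟩

theorem absolutelyMonotoneOn_Ioi_zero_iff {F : ℝ → ℝ} :
    AbsolutelyMonotoneOn F (Ioi 0) ↔ ∃ g, AbsolutelyMonotonicEntire g ∧ EqOn F g (Ioi 0) := by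
  refine ⟨fun hF ↦ ?_, fun ⟨g, hg, heq⟩ ↦ absolutelyMonotoneOn_congr
    (absolutelyMonotoneOn_mono hg.absolutelyMonotoneOn_Ici Ioi_subset_Ici_self) heq⟩
  have hmono : MonotoneOn F (Ioi 0) := by
    simpa using monotoneOn_iteratedDeriv_of_absolutelyMonotoneOn isOpen_Ioi (convex_Ioi 0) hF 0
  refine exists_absolutelyMonotonicEntire_eqOn_of_squeeze hmono fun d hd ↦ ?_
  obtain ⟨G, hG, heq⟩ := exists_absolutelyMonotonicEntire_shift_of_absolutelyMonotoneOn hF hd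
  refine ⟨G, hG, fun x hx ↦ ⟨?_, (heq x hx).le⟩⟩
  rw [heq x hx]
  exact hmono hx (add_pos hx hd) (by linarith)

end Bernstein

section MomentSequences

variable {K : Set ℝ} {s : ℕ → ℝ}

lemma IsAdmissible.isFiniteMeasure {μ : Measure ℝ} (hμ : IsAdmissible μ) : IsFiniteMeasure μ :=
  (integrable_const_iff_isFiniteMeasure one_ne_zero).1 (by simpa using hμ 0)

lemma integrable_pow_of_integrable_pow_two_mul {μ : Measure ℝ} [IsFiniteMeasure μ] {k : ℕ}
    (h : Integrable (fun x ↦ x ^ (2 * k)) μ) : Integrable (fun x ↦ x ^ k) μ := by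
  refine ((integrable_const 1).add h).mono' (by fun_prop) (.of_forall fun x ↦ ?_)
  rw [Pi.add_apply, Real.norm_eq_abs, mul_comm, pow_mul, ← sq_abs (x ^ k)]
  nlinarith [sq_nonneg (|x ^ k| - 1), sq_nonneg |x ^ k|]

lemma pow_mem_momentSet {u : ℝ} (hu : u ∈ K) : (fun k ↦ u ^ k) ∈ momentSet K :=
  ⟨.dirac u, fun _ ↦ integrable_dirac (by simp), by simp [Measure.dirac_apply, hu],
    fun k ↦ by simp [moment]⟩

lemma mem_momentSet_of_hasSum {ι : Type*} [Countable ι] {t : ι → ℕ → ℝ} {c : ι → ℝ}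
    (ht : ∀ i, t i ∈ momentSet K) (hc : ∀ i, 0 ≤ c i)
    (hsum : ∀ k, HasSum (fun i ↦ c i * t i k) (s k)) : s ∈ momentSet K := by
  choose μ hμ hsupp hmoment using ht
  have hterm (i : ι) (k : ℕ) : ∫ x, x ^ k ∂(ENNReal.ofReal (c i) • μ i) = c i * t i k := by
    rw [integral_smul_measure, ENNReal.toReal_ofReal (hc i), hmoment, moment, smul_eq_mul]
  have heven (k : ℕ) :
      Integrable (fun x ↦ x ^ (2 * k)) (.sum fun i ↦ ENNReal.ofReal (c i) • μ i) := by
    refine integrable_sum_measure (fun i ↦ (hμ i _).smul_measure ENNReal.ofReal_ne_top) ?_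
    simpa only [Real.norm_of_nonneg ((even_two_mul k).pow_nonneg _), hterm]
      using (hsum (2 * k)).summable
  have : IsFiniteMeasure (.sum fun i ↦ ENNReal.ofReal (c i) • μ i) :=
    (integrable_const_iff_isFiniteMeasure one_ne_zero).1 (by simpa using heven 0)
  have hint (k : ℕ) := integrable_pow_of_integrable_pow_two_mul (heven k)
  refine ⟨.sum fun i ↦ ENNReal.ofReal (c i) • μ i, hint, ?_, fun k ↦ ?_⟩
  · exact (Measure.ae_sum_iff (p := (· ∈ K))).2 fun i ↦ Measure.ae_smul_measure (hsupp i) _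
  · exact (hsum k).unique (by simpa only [hterm, moment] using hasSum_integral_measure (hint k))

lemma entrywise_mul_mem_momentSet {L N : Set ℝ} (hN : MeasurableSet N)
    (hmul : ∀ x ∈ K, ∀ y ∈ L, x * y ∈ N) {t : ℕ → ℝ} (hs : s ∈ momentSet K)
    (ht : t ∈ momentSet L) : (fun k ↦ s k * t k) ∈ momentSet N := by
  obtain ⟨μ, hμ, hμK, hs⟩ := hs
  obtain ⟨ν, hν, hνL, ht⟩ := ht
  have := hμ.isFiniteMeasure
  have := hν.isFiniteMeasure
  have hmeas : Measurable fun z : ℝ × ℝ ↦ z.1 * z.2 := by fun_prop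
  refine ⟨(μ.prod ν).map fun z ↦ z.1 * z.2, fun k ↦ ?_, ?_, fun k ↦ ?_⟩
  · rw [integrable_map_measure (by fun_prop) hmeas.aemeasurable]
    simpa only [Function.comp_def, mul_pow] using (hμ k).mul_prod (hν k)
  · refine (ae_map_iff (p := (· ∈ N)) hmeas.aemeasurable hN).2 ?_
    have hfst : ∀ᵐ z ∂μ.prod ν, z.1 ∈ K := Measure.quasiMeasurePreserving_fst.ae hμK
    have hsnd : ∀ᵐ z ∂μ.prod ν, z.2 ∈ L := Measure.quasiMeasurePreserving_snd.ae hνL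
    filter_upwards [hfst, hsnd] with z hz₁ hz₂ using hmul _ hz₁ _ hz₂
  · simp only [moment]
    rw [integral_map hmeas.aemeasurable (by fun_prop)]
    simp only [mul_pow]
    rw [integral_prod_mul (fun x : ℝ ↦ x ^ k) (fun x : ℝ ↦ x ^ k), hs, ht, moment, moment]

lemma add_mul_pow_mem_momentSet {a b u : ℝ} (hone : 1 ∈ K) (hu : u ∈ K) (ha : 0 ≤ a)
    (hb : 0 ≤ b) : (fun k ↦ a + b * u ^ k) ∈ momentSet K := by
  have hpow : ∀ i : Fin 2, (fun k ↦ ![1, u] i ^ k) ∈ momentSet K :=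
    Fin.forall_fin_two.2 ⟨pow_mem_momentSet hone, pow_mem_momentSet hu⟩
  refine mem_momentSet_of_hasSum hpow (c := ![a, b]) (Fin.forall_fin_two.2 ⟨ha, hb⟩) fun k ↦ ?_
  simpa only [Fin.sum_univ_two, Matrix.cons_val_zero, Matrix.cons_val_one, one_pow, mul_one] using
    hasSum_fintype fun i : Fin 2 ↦ ![a, b] i * ![1, u] i ^ k

lemma entrywise_pow_mem_momentSet {K : Submonoid ℝ} (hK : MeasurableSet (K : Set ℝ))
    (hs : s ∈ momentSet K) (n : ℕ) : (fun k ↦ s k ^ n) ∈ momentSet K := by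
  induction n with
  | zero => simpa only [pow_zero, one_pow] using pow_mem_momentSet K.one_mem
  | succ n ih =>
    simpa only [pow_succ] using
      entrywise_mul_mem_momentSet hK (fun _ hx _ hy ↦ K.mul_mem hx hy) ih hs

lemma AbsolutelyMonotonicEntire.comp_mem_momentSet {K : Submonoid ℝ}
    (hK : MeasurableSet (K : Set ℝ)) {g : ℝ → ℝ} (hg : AbsolutelyMonotonicEntire g)
    (hs : s ∈ momentSet K) : (fun k ↦ g (s k)) ∈ momentSet K := by
  obtain ⟨c, hc, hsum⟩ := hg
  exact mem_momentSet_of_hasSum (entrywise_pow_mem_momentSet hK hs) hc fun k ↦ hsum (s k)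

lemma nonneg_of_mem_momentSet (hK : K ⊆ Ici 0) (hs : s ∈ momentSet K) (k : ℕ) : 0 ≤ s k := by
  obtain ⟨μ, -, hμK, hs⟩ := hs
  rw [hs]
  refine integral_nonneg_of_ae ?_
  filter_upwards [show ∀ᵐ x ∂μ, x ∈ K from hμK] with x hx using pow_nonneg (hK hx) k

lemma eq_zero_of_mem_momentSet_of_eq_zero (hK : K ⊆ Ici 0) (hs : s ∈ momentSet K) {j k : ℕ}
    (hk : s k = 0) (hj : j ≠ 0) : s j = 0 := by
  obtain ⟨μ, hμ, hμK, hs⟩ := hs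
  have hpow_nonneg : 0 ≤ᵐ[μ] fun x ↦ x ^ k := by
    filter_upwards [show ∀ᵐ x ∂μ, x ∈ K from hμK] with x hx using pow_nonneg (hK hx) k
  have hpow_zero : (fun x ↦ x ^ k) =ᵐ[μ] 0 :=
    (integral_eq_zero_iff_of_nonneg_ae hpow_nonneg (hμ k)).1 ((hs k).symm.trans hk)
  rw [hs]
  refine integral_eq_zero_of_ae ?_
  filter_upwards [hpow_zero] with x hx
  rw [eq_zero_of_pow_eq_zero hx, zero_pow hj, Pi.zero_apply]

end MomentSequences

section RieszFunctional

/-- The Riesz functional of a sequence `s`: the linear functional on polynomials with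
`X ^ k ↦ s k`. A quadratic form of the Hankel matrix of `s` is its value at a square. -/
noncomputable def rieszFunctional (s : ℕ → ℝ) : ℝ[X] →ₗ[ℝ] ℝ :=
  Polynomial.lsum fun k ↦ LinearMap.toSpanSingleton ℝ ℝ (s k)

lemma rieszFunctional_eq_sum (s : ℕ → ℝ) (p : ℝ[X]) :
    rieszFunctional s p = ∑ k ∈ p.support, p.coeff k * s k := rfl

lemma rieszFunctional_monomial (s : ℕ → ℝ) (k : ℕ) (c : ℝ) :
    rieszFunctional s (.monomial k c) = c * s k :=
  Polynomial.sum_monomial_index c _ (zero_mul (s k))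

lemma rieszFunctional_pow_mul (x y : ℝ) (p : ℝ[X]) :
    rieszFunctional (fun k ↦ x ^ k * y) p = p.eval x * y := by
  simp only [rieszFunctional_eq_sum, Polynomial.eval_eq_sum, Polynomial.sum_def, Finset.sum_mul,
    mul_assoc]

lemma rieszFunctional_integral {α : Type*} [MeasurableSpace α] {μ : Measure α} {f : ℕ → α → ℝ}
    (hf : ∀ k, Integrable (f k) μ) (p : ℝ[X]) :
    rieszFunctional (fun k ↦ ∫ x, f k x ∂μ) p = ∫ x, rieszFunctional (fun k ↦ f k x) p ∂μ := by
  simp only [rieszFunctional_eq_sum]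
  rw [integral_finsetSum _ fun k _ ↦ (hf k).const_mul _]
  simp only [integral_const_mul]

lemma rieszFunctional_moment {μ : Measure ℝ} (hμ : IsAdmissible μ) (p : ℝ[X]) :
    rieszFunctional (moment μ) p = ∫ x, p.eval x ∂μ := by
  have heval (x : ℝ) : rieszFunctional (fun k ↦ x ^ k) p = p.eval x := by
    simpa only [mul_one] using rieszFunctional_pow_mul x 1 p
  simpa only [heval, ← moment.eq_1] using rieszFunctional_integral hμ p

lemma rieszFunctional_sq_nonneg_of_mem_momentSet {K : Set ℝ} {s : ℕ → ℝ} (hs : s ∈ momentSet K)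
    (q : ℝ[X]) : 0 ≤ rieszFunctional s (q ^ 2) := by
  obtain ⟨μ, hμ, -, hs⟩ := hs
  rw [funext hs, rieszFunctional_moment hμ]
  refine integral_nonneg fun x ↦ ?_
  rw [Polynomial.eval_pow]
  positivity

lemma iteratedDeriv_rieszFunctional {f : ℕ → ℝ → ℝ} {n : ℕ} (hf : ∀ k, ContDiff ℝ n (f k))
    (p : ℝ[X]) : iteratedDeriv n (fun x ↦ rieszFunctional (fun k ↦ f k x) p) =
      fun x ↦ rieszFunctional (fun k ↦ iteratedDeriv n (f k) x) p := by
  funext x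
  simp only [rieszFunctional_eq_sum]
  rw [iteratedDeriv_fun_sum fun k _ ↦ (contDiff_const.mul (hf k)).contDiffAt]
  simp only [iteratedDeriv_const_mul_field]

lemma contDiff_rieszFunctional {f : ℕ → ℝ → ℝ} {n : ℕ∞ω} (hf : ∀ k, ContDiff ℝ n (f k))
    (p : ℝ[X]) : ContDiff ℝ n fun x ↦ rieszFunctional (fun k ↦ f k x) p := by
  simp only [rieszFunctional_eq_sum]
  exact ContDiff.sum fun k _ ↦ contDiff_const.mul (hf k)

end RieszFunctional

section HornLoewner

lemma iteratedDeriv_nonneg_of_forall_lt_eq_zero {f : ℝ → ℝ} {x₀ : ℝ} {n : ℕ}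
    (hf : ContDiff ℝ n f) (hzero : ∀ j < n, iteratedDeriv j f x₀ = 0)
    (hnonneg : ∀ᶠ x in 𝓝[>] x₀, 0 ≤ f x) : 0 ≤ iteratedDeriv n f x₀ := by
  have htaylor (x : ℝ) : taylorWithinEval f n univ x₀ x =
      (x - x₀) ^ n * (iteratedDeriv n f x₀ / n !) := by
    rw [taylor_within_apply, Finset.sum_range_succ, Finset.sum_eq_zero, zero_add,
      iteratedDerivWithin_univ, smul_eq_mul]
    · ring
    · intro k hk
      rw [iteratedDerivWithin_univ, hzero k (Finset.mem_range.1 hk), smul_zero]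
  have hlim : Tendsto (fun x ↦ (f x - taylorWithinEval f n univ x₀ x) / (x - x₀) ^ n) (𝓝[>] x₀)
      (𝓝 0) :=
    (Real.taylor_tendsto convex_univ (mem_univ x₀) hf.contDiffOn).mono_left
      (nhdsWithin_mono x₀ (subset_univ _))
  have hle : -(iteratedDeriv n f x₀ / n !) ≤ 0 := by
    refine ge_of_tendsto hlim ?_
    filter_upwards [hnonneg, self_mem_nhdsWithin] with x hx hgt
    have hpos : 0 < (x - x₀) ^ n := pow_pos (sub_pos.2 hgt) n
    rw [htaylor, le_div_iff₀ hpos]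
    linarith
  have hquot : 0 ≤ iteratedDeriv n f x₀ / n ! := neg_nonpos.1 hle
  rwa [le_div_iff₀ (by positivity), zero_mul] at hquot

/-- The hypothesis of the Horn–Loewner argument: the Hankel matrices `(F (a + b * u ^ (i + j)))`
with `a, b ≥ 0` are positive semidefinite, which is expressed through Riesz functionals. -/
def IsHornPositive (u : ℝ) (F : ℝ → ℝ) : Prop :=
  ∀ a ≥ 0, ∀ b ≥ 0, ∀ q : ℝ[X], 0 ≤ rieszFunctional (fun k ↦ F (a + b * u ^ k)) (q ^ 2)

lemma iteratedDeriv_rieszFunctional_comp_zero {G : ℝ → ℝ} {n : ℕ} (hG : ContDiff ℝ n G)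
    (a u : ℝ) (p : ℝ[X]) :
    iteratedDeriv n (fun b ↦ rieszFunctional (fun k ↦ G (a + b * u ^ k)) p) 0 =
      p.eval (u ^ n) * iteratedDeriv n G a := by
  have hderiv (k : ℕ) : iteratedDeriv n (fun b ↦ G (a + b * u ^ k)) 0 =
      (u ^ n) ^ k * iteratedDeriv n G a := by
    simp only [mul_comm _ (u ^ k)]
    rw [iteratedDeriv_comp_const_mul (f := fun z ↦ G (a + z)) (by fun_prop),
      iteratedDeriv_comp_const_add]
    simp [← pow_mul, mul_comm]
  rw [iteratedDeriv_rieszFunctional (by fun_prop)]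
  simp only [hderiv, rieszFunctional_pow_mul]

namespace IsHornPositive

variable {u : ℝ} {F : ℝ → ℝ}

lemma monotoneOn (hF : IsHornPositive 0 F) : MonotoneOn F (Ici 0) := by
  intro x hx y _ hxy
  have h := hF x hx (y - x) (sub_nonneg.2 hxy) (1 - .X)
  have hexpand : (1 - .X : ℝ[X]) ^ 2 = .monomial 0 1 - .monomial 1 2 + .monomial 2 1 := by
    simp only [← Polynomial.C_mul_X_pow_eq_monomial, Polynomial.C_ofNat, Polynomial.C_1]
    ring
  simp only [hexpand, map_add, map_sub, rieszFunctional_monomial, ne_eq, one_ne_zero,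
    two_ne_zero, not_false_eq_true, zero_pow, pow_zero, mul_one, mul_zero, add_zero,
    add_sub_cancel] at h
  linarith

lemma iteratedDeriv_nonneg (hF : IsHornPositive u F) (hu₀ : 0 < u) (hu₁ : u < 1)
    {n : ℕ} (hsmooth : ContDiff ℝ n F) {a : ℝ} (ha : 0 ≤ a) : 0 ≤ iteratedDeriv n F a := by
  -- A `q` vanishing at `u ^ 0, …, u ^ (n - 1)` isolates the `n`-th derivative.
  set q : ℝ[X] := ∏ j ∈ Finset.range n, (.X - .C (u ^ j)) with hq
  have hq_eval (x : ℝ) : q.eval x = ∏ j ∈ Finset.range n, (x - u ^ j) := by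
    simp [hq, Polynomial.eval_prod]
  have hnonneg : 0 ≤ (q ^ 2).eval (u ^ n) * iteratedDeriv n F a := by
    rw [← iteratedDeriv_rieszFunctional_comp_zero hsmooth]
    refine iteratedDeriv_nonneg_of_forall_lt_eq_zero
      (contDiff_rieszFunctional (by fun_prop) _) (fun j hj ↦ ?_) ?_
    · have hsmooth_j : ContDiff ℝ j F := hsmooth.of_le (mod_cast hj.le)
      rw [iteratedDeriv_rieszFunctional_comp_zero hsmooth_j, Polynomial.eval_pow, hq_eval,
        Finset.prod_eq_zero (Finset.mem_range.2 hj) (sub_self _), zero_pow two_ne_zero, zero_mul]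
    · filter_upwards [self_mem_nhdsWithin] with b hb using hF a ha b (le_of_lt hb) q
  have hq_ne : q.eval (u ^ n) ≠ 0 := by
    rw [hq_eval, Finset.prod_ne_zero_iff]
    exact fun j hj ↦ sub_ne_zero.2
      (pow_lt_pow_right_of_lt_one₀ hu₀ hu₁ (Finset.mem_range.1 hj)).ne
  rw [Polynomial.eval_pow] at hnonneg
  exact nonneg_of_mul_nonneg_right hnonneg (by positivity)

end IsHornPositive

end HornLoewner

section Mollification

/-- The convolution of `F` with the normalised bump function `b`, translated by the radius of the
support of `b` so that its value at `x` averages `F` over `(x, x + 2 * b.rOut)`. -/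
noncomputable def forwardMollification (b : ContDiffBump (0 : ℝ)) (F : ℝ → ℝ) (x : ℝ) : ℝ :=
  ∫ t, b.normed volume t * F (x + b.rOut - t)

variable (b : ContDiffBump (0 : ℝ)) {F : ℝ → ℝ}

lemma mem_Ioo_of_normed_ne_zero {t : ℝ} (ht : b.normed volume t ≠ 0) :
    t ∈ Ioo (-b.rOut) b.rOut := by
  have hmem : t ∈ Function.support (b.normed volume) := ht
  rwa [b.support_normed_eq, Real.ball_eq_Ioo, zero_sub, zero_add] at hmem

lemma integrable_normed_mul (hF : LocallyIntegrable F) (x : ℝ) :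
    Integrable fun t ↦ b.normed volume t * F (x + b.rOut - t) := by
  simpa [ConvolutionExistsAt] using b.hasCompactSupport_normed.convolutionExists_left
    (.lsmul ℝ ℝ) b.continuous_normed hF (x + b.rOut)

lemma contDiff_forwardMollification (hF : LocallyIntegrable F) :
    ContDiff ℝ ∞ (forwardMollification b F) :=
  (b.hasCompactSupport_normed.contDiff_convolution_left (.lsmul ℝ ℝ) b.contDiff_normed hF).comp
    (contDiff_id.add contDiff_const)

lemma le_forwardMollification (hF : LocallyIntegrable F) {x c : ℝ}
    (hle : ∀ y ∈ Ioo x (x + 2 * b.rOut), c ≤ F y) : c ≤ forwardMollification b F x := by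
  calc c = ∫ t, b.normed volume t * c := by rw [integral_mul_const, b.integral_normed, one_mul]
    _ ≤ forwardMollification b F x := by
      refine integral_mono (b.integrable_normed.mul_const c) (integrable_normed_mul b hF x)
        fun t ↦ ?_
      rcases eq_or_ne (b.normed volume t) 0 with ht | ht
      · simp only [ht, zero_mul, le_refl]
      · obtain ⟨hlt, hgt⟩ := mem_Ioo_of_normed_ne_zero b ht
        exact mul_le_mul_of_nonneg_left (hle _ ⟨by linarith, by linarith⟩) (b.nonneg_normed t)

lemma forwardMollification_le (hF : LocallyIntegrable F) {x c : ℝ}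
    (hle : ∀ y ∈ Ioo x (x + 2 * b.rOut), F y ≤ c) : forwardMollification b F x ≤ c := by
  have hneg := le_forwardMollification b hF.neg (c := -c) fun y hy ↦ neg_le_neg (hle y hy)
  simpa [forwardMollification, integral_neg] using hneg

lemma isHornPositive_forwardMollification {u : ℝ} (hpos : IsHornPositive u F)
    (hF : LocallyIntegrable F) : IsHornPositive u (forwardMollification b F) := by
  intro a ha e he q
  simp only [forwardMollification]
  rw [rieszFunctional_integral fun k ↦ integrable_normed_mul b hF _]
  refine integral_nonneg fun t ↦ ?_
  have hfactor : rieszFunctional (fun k ↦ b.normed volume t * F (a + e * u ^ k + b.rOut - t))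
      (q ^ 2) = b.normed volume t *
        rieszFunctional (fun k ↦ F (a + (b.rOut - t) + e * u ^ k)) (q ^ 2) := by
    simp only [rieszFunctional_eq_sum, Finset.mul_sum]
    refine Finset.sum_congr rfl fun k _ ↦ ?_
    rw [show a + e * u ^ k + b.rOut - t = a + (b.rOut - t) + e * u ^ k by ring]
    ring
  rw [Pi.zero_apply, hfactor]
  rcases eq_or_ne (b.normed volume t) 0 with ht | ht
  · rw [ht, zero_mul]
  · have hshift : 0 ≤ b.rOut - t := sub_nonneg.2 (mem_Ioo_of_normed_ne_zero b ht).2.le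
    exact mul_nonneg (b.nonneg_normed t) (hpos _ (by positivity) e he q)

theorem IsHornPositive.exists_absolutelyMonotonicEntire {u : ℝ} (hpos : IsHornPositive u F)
    (hu₀ : 0 < u) (hu₁ : u < 1) (hF : Monotone F) :
    ∃ g, AbsolutelyMonotonicEntire g ∧ EqOn F g (Ioi 0) := by
  refine exists_absolutelyMonotonicEntire_eqOn_of_squeeze (hF.monotoneOn _) fun d hd ↦ ?_
  let b : ContDiffBump (0 : ℝ) := ⟨d / 4, d / 2, by positivity, by linarith⟩
  have hint : LocallyIntegrable F := hF.locallyIntegrable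
  have hsmooth := contDiff_forwardMollification b hint
  have hmono : AbsolutelyMonotoneOn (forwardMollification b F) (Ioi 0) :=
    .of_contDiff hsmooth fun _ _ hx ↦
      (isHornPositive_forwardMollification b hpos hint).iteratedDeriv_nonneg hu₀ hu₁
        (hsmooth.of_le (by exact_mod_cast le_top)) (le_of_lt hx)
  obtain ⟨G, hG, heq⟩ := absolutelyMonotoneOn_Ioi_zero_iff.1 hmono
  refine ⟨G, hG, fun x hx ↦ ?_⟩
  rw [← heq hx]
  have hwidth : x + 2 * b.rOut = x + d := by simp only [b]; ring
  exact ⟨le_forwardMollification b hint fun y hy ↦ hF hy.1.le,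
    forwardMollification_le b hint fun y hy ↦ hF (hwidth ▸ hy.2.le)⟩

end Mollification

section MomentTransforms

variable {K : Submonoid ℝ} {F : ℝ → ℝ}

lemma isHornPositive_of_mapsTo_momentSet {u : ℝ} (hu : u ∈ K)
    (hmaps : ∀ s ∈ momentSet K, (fun k ↦ F (s k)) ∈ momentSet K) : IsHornPositive u F :=
  fun _ ha _ hb ↦ rieszFunctional_sq_nonneg_of_mem_momentSet
    (hmaps _ (add_mul_pow_mem_momentSet K.one_mem hu ha hb))

lemma exists_absolutelyMonotonicEntire_of_mapsTo_momentSet {u : ℝ} (hzero : 0 ∈ K) (hu : u ∈ K)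
    (hu₀ : 0 < u) (hu₁ : u < 1)
    (hmaps : ∀ s ∈ momentSet K, (fun k ↦ F (s k)) ∈ momentSet K) :
    ∃ g, AbsolutelyMonotonicEntire g ∧ EqOn F g (Ioi 0) ∧ F 0 ≤ g 0 := by
  have hmono : MonotoneOn F (Ici 0) := (isHornPositive_of_mapsTo_momentSet hzero hmaps).monotoneOn
  have hextend : Monotone fun x ↦ F (max x 0) := fun x y hxy ↦
    hmono (le_max_right x 0) (le_max_right y 0) (max_le_max_right 0 hxy)
  have hpos : IsHornPositive u fun x ↦ F (max x 0) := fun a ha b hb q ↦ by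
    have hmax (k : ℕ) : max (a + b * u ^ k) 0 = a + b * u ^ k := max_eq_left (by positivity)
    simpa only [hmax] using isHornPositive_of_mapsTo_momentSet hu hmaps a ha b hb q
  obtain ⟨g, hg, heq⟩ := hpos.exists_absolutelyMonotonicEntire hu₀ hu₁ hextend
  have heq : EqOn F g (Ioi 0) := fun x hx ↦ by
    simpa only [max_eq_left (mem_Ioi.1 hx).le] using heq hx
  refine ⟨g, hg, heq, ?_⟩
  have hlim : Tendsto g (𝓝[>] 0) (𝓝 (g 0)) := hg.contDiff.continuous.continuousWithinAt
  refine ge_of_tendsto hlim ?_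
  filter_upwards [self_mem_nhdsWithin] with x hx
  rw [← heq hx]
  exact hmono self_mem_Ici (Ioi_subset_Ici_self hx) (le_of_lt hx)

lemma comp_mem_momentSet_of_eqOn_absolutelyMonotonicEntire (hK : MeasurableSet (K : Set ℝ))
    (hKnonneg : (K : Set ℝ) ⊆ Ici 0) (hzero : 0 ∈ K) {g : ℝ → ℝ}
    (hg : AbsolutelyMonotonicEntire g) (heq : EqOn F g (Ioi 0)) (hF₀ : 0 ≤ F 0)
    (hFg : F 0 ≤ g 0) {s : ℕ → ℝ} (hs : s ∈ momentSet K) :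
    (fun k ↦ F (s k)) ∈ momentSet K := by
  have hs_nonneg := nonneg_of_mem_momentSet hKnonneg hs
  by_cases hvanish : ∃ k, s k = 0
  -- The measure is then a point mass at `0`, so `F ∘ s` is constant from index `1` on.
  · obtain ⟨k, hk⟩ := hvanish
    have hmono : F 0 ≤ F (s 0) := by
      rcases (hs_nonneg 0).eq_or_lt with h | h
      · rw [← h]
      · rw [heq h]
        exact hFg.trans (hg.monotoneOn_Ici self_mem_Ici h.le h.le)
    have htransform : (fun j ↦ F (s j)) = fun j ↦ F 0 + (F (s 0) - F 0) * 0 ^ j := by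
      funext j
      rcases eq_or_ne j 0 with rfl | hj
      · rw [pow_zero, mul_one, add_sub_cancel]
      · rw [eq_zero_of_mem_momentSet_of_eq_zero hKnonneg hs hk hj, zero_pow hj, mul_zero, add_zero]
    rw [htransform]
    exact add_mul_pow_mem_momentSet K.one_mem hzero hF₀ (sub_nonneg.2 hmono)
  · push Not at hvanish
    have htransform : (fun k ↦ F (s k)) = fun k ↦ g (s k) :=
      funext fun k ↦ heq ((hs_nonneg k).lt_of_ne (hvanish k).symm)
    rw [htransform]
    exact hg.comp_mem_momentSet hK hs

theorem moment_transform_Icc_zero_one_general (F : ℝ → ℝ)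
    (hK : MeasurableSet (K : Set ℝ)) (hKnonneg : (K : Set ℝ) ⊆ Ici 0) (hzero : 0 ∈ K)
    (hKsmall : ∃ u ∈ K, 0 < u ∧ u < 1) :
    (∀ s ∈ momentSet K, (fun k ↦ F (s k)) ∈ momentSet K) ↔
    (ContDiffOn ℝ (⊤ : ℕ∞) F (Ioi 0) ∧
      (∀ k : ℕ, ∀ x ∈ Ioi (0 : ℝ), 0 ≤ iteratedDerivWithin k F (Ioi 0) x) ∧
      0 ≤ F 0 ∧ ∃ L : ℝ, Tendsto F (𝓝[>] 0) (𝓝 L) ∧ F 0 ≤ L) := by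
  have hlim {g : ℝ → ℝ} (hg : AbsolutelyMonotonicEntire g) (heq : EqOn F g (Ioi 0)) :
      Tendsto F (𝓝[>] 0) (𝓝 (g 0)) :=
    hg.contDiff.continuous.continuousWithinAt.congr' (heq.symm.eventuallyEq_of_mem
      self_mem_nhdsWithin)
  rw [← and_assoc, ← AbsolutelyMonotoneOn.iff_iteratedDerivWithin_nonneg isOpen_Ioi.uniqueDiffOn]
  constructor
  · intro hmaps
    obtain ⟨u, hu, hu₀, hu₁⟩ := hKsmall
    obtain ⟨g, hg, heq, hFg⟩ :=
      exists_absolutelyMonotonicEntire_of_mapsTo_momentSet hzero hu hu₀ hu₁ hmaps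
    have hconst : (fun _ ↦ F 0) ∈ momentSet K := by
      simpa using hmaps _ (add_mul_pow_mem_momentSet K.one_mem hzero le_rfl le_rfl)
    exact ⟨absolutelyMonotoneOn_Ioi_zero_iff.2 ⟨g, hg, heq⟩,
      nonneg_of_mem_momentSet hKnonneg hconst 0, g 0, hlim hg heq, hFg⟩
  · rintro ⟨hF, hF₀, L, hL, hFL⟩ s hs
    obtain ⟨g, hg, heq⟩ := absolutelyMonotoneOn_Ioi_zero_iff.1 hF
    obtain rfl := tendsto_nhds_unique hL (hlim hg heq)
    exact comp_mem_momentSet_of_eqOn_absolutelyMonotonicEntire hK hKnonneg hzero hg heq hF₀ hFL hs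

end MomentTransforms

/-- `F : [0,∞) → ℝ` maps `M([0,1])` into itself entrywise iff `F` is absolutely monotonic
on `(0,∞)` and `0 ≤ F 0 ≤ lim_{ε→0⁺} F ε`. -/
theorem moment_transform_Icc_zero_one (F : ℝ → ℝ) :
    (∀ s ∈ momentSet (Set.Icc (0 : ℝ) 1),
      (fun k => F (s k)) ∈ momentSet (Set.Icc (0 : ℝ) 1)) ↔
    (ContDiffOn ℝ (⊤ : ℕ∞) F (Set.Ioi 0) ∧
      (∀ k : ℕ, ∀ x ∈ Set.Ioi (0 : ℝ), 0 ≤ iteratedDerivWithin k F (Set.Ioi 0) x) ∧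
      0 ≤ F 0 ∧
      ∃ L : ℝ, Tendsto F (nhdsWithin 0 (Set.Ioi 0)) (nhds L) ∧ F 0 ≤ L) :=
  moment_transform_Icc_zero_one_general (K := unitInterval.submonoid) F measurableSet_Icc
    Icc_subset_Ici_self unitInterval.zero_mem
    ⟨1 / 2, ⟨by norm_num, by norm_num⟩, by norm_num, by norm_num⟩
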